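/- Let G be a group generated by a finite set S and let H be a stable subgroup of G. Then H has bounded packing in G: for every D ≥ 0 there exists N ∈ ℕ such that among any N distinct left cosets of H in G there are two at d_S-distance at least D. -/

import Mathlib

open Pointwise

section BasicDefs

variable {G : Type*} [Group G]

/-- The word length of `g` with respect to the generating set `S`
(words use letters from `S ∪ S⁻¹`). -/
noncomputable def wordLength (S : Set G) (g : G) : ℕ :=
  sInf {n : ℕ | ∃ l : List G, l.length = n ∧ (∀ x ∈ l, x ∈ S ∨ x⁻¹ ∈ S) ∧ l.prod = g}

/-- The word metric on `G` with respect to the generating set `S`. -/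
noncomputable def wordDist (S : Set G) (g h : G) : ℝ :=
  (wordLength S (g⁻¹ * h) : ℝ)

/-- The closed `r`-neighborhood of a subset `A` with respect to the word metric `d_S`. -/
def nbhd (S : Set G) (r : ℝ) (A : Set G) : Set G :=
  {g : G | ∃ a ∈ A, wordDist S g a ≤ r}

/-- The distance between two subsets: the infimum of distances between their elements. -/
noncomputable def setDist (S : Set G) (A B : Set G) : ℝ :=
  sInf {r : ℝ | ∃ a ∈ A, ∃ b ∈ B, r = wordDist S a b}

/-- The conjugate subgroup `H^g = g H g⁻¹`. -/
def conjSub (g : G) (H : Subgroup G) : Subgroup G :=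
  H.map (MulAut.conj g).toMonoidHom

end BasicDefs

/-- `γ` restricted to `{0, …, n}` is a `(K, ε)`-quasigeodesic for the distance function `d`. -/
def IsQuasigeodesic {α : Type*} (d : α → α → ℝ) (K ε : ℝ) (n : ℕ) (γ : ℕ → α) : Prop :=
  ∀ i j : ℕ, i ≤ n → j ≤ n →
    (1 / K) * |(i : ℝ) - (j : ℝ)| - ε ≤ d (γ i) (γ j) ∧
      d (γ i) (γ j) ≤ K * |(i : ℝ) - (j : ℝ)| + ε

/-- `γ` restricted to `{0, …, n}` is a geodesic for the distance function `d`. -/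
def IsGeodesic {α : Type*} (d : α → α → ℝ) (n : ℕ) (γ : ℕ → α) : Prop :=
  ∀ i j : ℕ, i ≤ n → j ≤ n → d (γ i) (γ j) = |(i : ℝ) - (j : ℝ)|

/-- The path `γ` (on `{0, …, n}`) is `f`-stable: every `(K, ε)`-quasigeodesic with endpoints
on `γ` stays in the `f K ε`-neighborhood of `γ`. -/
def IsStablePath {α : Type*} (d : α → α → ℝ) (f : ℝ → ℝ → ℝ) (n : ℕ) (γ : ℕ → α) : Prop :=
  ∀ K ε : ℝ, 1 ≤ K → 0 ≤ ε → ∀ (m : ℕ) (η : ℕ → α),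
    IsQuasigeodesic d K ε m η →
    (∃ i ≤ n, η 0 = γ i) → (∃ i ≤ n, η m = γ i) →
    ∀ j ≤ m, ∃ i ≤ n, d (η j) (γ i) ≤ f K ε

/-- The Gromov product `⟨x, y⟩_w` with respect to a distance function `d`. -/
noncomputable def gromovProd {α : Type*} (d : α → α → ℝ) (w x y : α) : ℝ :=
  (d w x + d w y - d x y) / 2

/-- Gromov hyperbolicity of a distance function, via the four-point condition. -/
def IsHyperbolicDist {α : Type*} (d : α → α → ℝ) : Prop :=
  ∃ δ : ℝ, 0 ≤ δ ∧ ∀ w x y z : α,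
    min (gromovProd d w x y) (gromovProd d w y z) - δ ≤ gromovProd d w x z

section GroupDefs

variable {G : Type*} [Group G]

/-- `H` is a stable subgroup of `(G, d_S)` with stability function `f`: `H` has a finite
generating set `T` such that the inclusion `(H, d_T) → (G, d_S)` is a quasi-isometric
embedding sending every `d_T`-geodesic to an `f`-stable quasigeodesic of `(G, d_S)`. -/
def IsStableSubgroupWith (S : Set G) (H : Subgroup G) (f : ℝ → ℝ → ℝ) : Prop :=
  ∃ T : Set H, T.Finite ∧ Subgroup.closure T = ⊤ ∧
    (∃ μ c : ℝ, 1 ≤ μ ∧ 0 ≤ c ∧ ∀ h₁ h₂ : H,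
      (1 / μ) * wordDist T h₁ h₂ - c ≤ wordDist S (h₁ : G) (h₂ : G) ∧
        wordDist S (h₁ : G) (h₂ : G) ≤ μ * wordDist T h₁ h₂ + c) ∧
    ∀ (n : ℕ) (γ : ℕ → H), IsGeodesic (wordDist T) n γ →
      (∃ K ε : ℝ, 1 ≤ K ∧ 0 ≤ ε ∧
        IsQuasigeodesic (wordDist S) K ε n (fun i => (γ i : G))) ∧
      IsStablePath (wordDist S) f n (fun i => (γ i : G))

/-- `H` is a stable subgroup of `(G, d_S)`. -/
def IsStableSubgroup (S : Set G) (H : Subgroup G) : Prop :=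
  ∃ f : ℝ → ℝ → ℝ, IsStableSubgroupWith S H f

/-- The family `Q` of subgroups is hyperbolically embedded in `(G, X)`:
(Q1) geometric separation, (Q2) finite generation, (Q3) uniform quasi-isometric embedding. -/
def IsHypEmbFamily {G : Type*} [Group G] {ι : Type*} (X : Set G) (Q : ι → Subgroup G) : Prop :=
  (∀ ε : ℝ, 0 < ε → ∃ R : ℝ, ∀ (g : G) (i j : ι),
      (∃ a ∈ (Q i : Set G) ∩ nbhd X ε (g • (Q j : Set G)),
        ∃ b ∈ (Q i : Set G) ∩ nbhd X ε (g • (Q j : Set G)), R ≤ wordDist X a b) →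
      i = j ∧ g ∈ Q i) ∧
  ∃ Y : ι → Set G, (∀ i, (Y i).Finite ∧ Y i ⊆ (Q i : Set G) ∧ Subgroup.closure (Y i) = Q i) ∧
    ∃ μ c : ℝ, 1 ≤ μ ∧ 0 ≤ c ∧ ∀ i : ι, ∀ h ∈ Q i,
      (wordLength (Y i) h : ℝ) ≤ μ * (wordLength X h : ℝ) + c

/-- The subset `H` of `G` satisfies the WPD condition in `(G, X)`. -/
def WPDSet (X : Set G) (H : Set G) : Prop :=
  ∀ ε : ℝ, 0 < ε → ∃ N : ℝ, 0 < N ∧ ∀ h₁ h₂ : G, h₁ ∈ H → h₂ ∈ H →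
    N < wordDist X h₁ h₂ →
    {g : G | wordDist X h₁ (g * h₁) < ε ∧ wordDist X h₂ (g * h₂) < ε}.Finite

/-- A quasimorphism on `G`. -/
def IsQuasimorphism (q : G → ℝ) : Prop :=
  ∃ D : ℝ, 0 ≤ D ∧ ∀ x y : G, |q (x * y) - q x - q y| ≤ D

/-- A homogeneous quasimorphism on `G`. -/
def IsHomogeneousQM (q : G → ℝ) : Prop :=
  IsQuasimorphism q ∧ ∀ (x : G) (n : ℕ), q (x ^ n) = (n : ℝ) * q x

/-- `H` is a quasiconvex subgroup of `(G, d_S)`: every geodesic with endpoints in `H`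
lies in a uniformly bounded neighborhood of `H`. -/
def IsQuasiconvex (S : Set G) (H : Subgroup G) : Prop :=
  ∃ C : ℝ, 0 ≤ C ∧ ∀ (n : ℕ) (γ : ℕ → G), IsGeodesic (wordDist S) n γ →
    γ 0 ∈ H → γ n ∈ H → ∀ i ≤ n, ∃ h ∈ H, wordDist S (γ i) h ≤ C

end GroupDefs

/-!
In a tree, pairwise intersecting subtrees have a common point: project a root to each of them, and
the farthest projection lies in all of them. A coarse version of this Helly property holds for
uniformly stable subsets, such as the cosets of `H`. The root is taken in one of the subsets, so
that the paths compared with one another all run along stable geodesics; the tree-like behaviour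
comes from the fact that a geodesic to a nearest point of a quasigeodesic, continued along it, is
again a quasigeodesic. Thus any finite collection of cosets at pairwise distance less than `D`
meets a ball whose radius depends only on `D`, and such a ball is finite while cosets are disjoint.
-/

section Paths

variable {α : Type*} {d : α → α → ℝ} {n k : ℕ} {γ : ℕ → α}

theorem IsGeodesic.tail (hγ : IsGeodesic d n γ) (hk : k ≤ n) :
    IsGeodesic d (n - k) fun l => γ (k + l) := fun i j hi hj => by
  rw [hγ (k + i) (k + j) (by omega) (by omega)]
  push_cast
  rw [add_sub_add_left_eq_sub]

theorem IsGeodesic.reverse (hγ : IsGeodesic d n γ) (hk : k ≤ n) :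
    IsGeodesic d k fun l => γ (k - l) := fun i j hi hj => by
  rw [hγ (k - i) (k - j) (by omega) (by omega), Nat.cast_sub hi, Nat.cast_sub hj,
    sub_sub_sub_cancel_left, abs_sub_comm]

theorem IsGeodesic.dist_of_le (hγ : IsGeodesic d n γ) {i j : ℕ} (hij : i ≤ j) (hj : j ≤ n) :
    d (γ i) (γ j) = (j : ℝ) - i := by
  rw [hγ i j (hij.trans hj) hj, abs_sub_comm, abs_of_nonneg (by simpa using hij)]

/-- The path which follows `γ` until time `m` and then `η`, where `η` is started at time `m`. -/
def concatPath (m : ℕ) (γ η : ℕ → α) (t : ℕ) : α :=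
  if t ≤ m then γ t else η (t - m)

theorem concatPath_of_le {m t : ℕ} (γ η : ℕ → α) (ht : t ≤ m) : concatPath m γ η t = γ t :=
  if_pos ht

theorem concatPath_add {m : ℕ} {γ η : ℕ → α} (h : γ m = η 0) (l : ℕ) :
    concatPath m γ η (m + l) = η l := by
  rcases Nat.eq_zero_or_pos l with rfl | hl
  · rw [add_zero, concatPath_of_le γ η le_rfl, h]
  · rw [concatPath, if_neg (by omega), Nat.add_sub_cancel_left]

/-- The path of length `m + 2` which jumps from `x` to `η 0`, follows `η` until time `m`, and jumps
from `η m` to `y`. -/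
def attachEnds (x y : α) (m : ℕ) (η : ℕ → α) : ℕ → α
  | 0 => x
  | t + 1 => if t ≤ m then η t else y

end Paths

section MetricPaths

variable {X : Type*} [PseudoMetricSpace X] {K ε r : ℝ} {n m : ℕ} {γ η : ℕ → X}

/-- Any two points of `X` are joined by a geodesic whose times are integers, as in the vertex set
of a connected graph; in particular all distances are natural numbers. -/
def HasDiscreteGeodesics (X : Type*) [PseudoMetricSpace X] : Prop :=
  ∀ x y : X, ∃ (n : ℕ) (γ : ℕ → X), IsGeodesic dist n γ ∧ γ 0 = x ∧ γ n = y

theorem HasDiscreteGeodesics.exists_nearest {ι : Type*} [Nonempty ι]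
    (hX : HasDiscreteGeodesics X) (x : X) (u : ι → X) :
    ∃ i, ∀ j, dist x (u i) ≤ dist x (u j) := by
  have hnat : ∀ i, ∃ n : ℕ, dist x (u i) = n := fun i => by
    obtain ⟨n, γ, hγ, h0, hn⟩ := hX x (u i)
    exact ⟨n, by simpa [h0, hn] using hγ.dist_of_le n.zero_le le_rfl⟩
  choose len hlen using hnat
  refine ⟨Function.argmin len, fun j => ?_⟩
  rw [hlen, hlen]
  exact_mod_cast Function.argmin_le len j

theorem isGeodesic_of_dist_succ_le_one (hstep : ∀ i < n, dist (γ i) (γ (i + 1)) ≤ 1)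
    (hn : n ≤ dist (γ 0) (γ n)) : IsGeodesic dist n γ := by
  have hlip : ∀ i j, i ≤ j → j ≤ n → dist (γ i) (γ j) ≤ (j : ℝ) - i := fun i j hij hj => by
    simpa [Nat.cast_sub hij] using
      dist_le_Ico_sum_of_dist_le hij (d := fun _ => 1) fun {k} _ hkj => hstep k (hkj.trans_le hj)
  have heq : ∀ i j, i ≤ j → j ≤ n → dist (γ i) (γ j) = (j : ℝ) - i := fun i j hij hj => by
    refine (hlip i j hij hj).antisymm ?_
    have h0i := hlip 0 i i.zero_le (hij.trans hj)
    have hjn := hlip j n hj le_rfl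
    have htri := dist_triangle4 (γ 0) (γ i) (γ j) (γ n)
    push_cast at h0i
    linarith
  intro i j hi hj
  rcases le_total i j with hij | hij
  · rw [heq i j hij hj, abs_sub_comm, abs_of_nonneg (by simpa using hij)]
  · rw [dist_comm, heq j i hij hi, abs_of_nonneg (by simpa using hij)]

theorem isQuasigeodesic_of_le (h : ∀ i j : ℕ, i ≤ j → j ≤ n →
      1 / K * ((j : ℝ) - i) - ε ≤ dist (γ i) (γ j) ∧
        dist (γ i) (γ j) ≤ K * ((j : ℝ) - i) + ε) :
    IsQuasigeodesic dist K ε n γ := by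
  intro i j hi hj
  rcases le_total i j with hij | hij
  · rw [abs_sub_comm, abs_of_nonneg (by simpa using hij)]
    exact h i j hij hj
  · rw [abs_of_nonneg (by simpa using hij), dist_comm]
    exact h j i hij hi

theorem IsQuasigeodesic.dist_of_le (hγ : IsQuasigeodesic dist K ε n γ) {i j : ℕ} (hij : i ≤ j)
    (hj : j ≤ n) :
    1 / K * ((j : ℝ) - i) - ε ≤ dist (γ i) (γ j) ∧
      dist (γ i) (γ j) ≤ K * ((j : ℝ) - i) + ε := by
  have h := hγ i j (hij.trans hj) hj
  rwa [abs_sub_comm, abs_of_nonneg (by simpa using hij)] at h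

theorem IsQuasigeodesic.mono (hK : 1 ≤ K) {K' : ℝ} (hKK' : K ≤ K')
    (hγ : IsQuasigeodesic dist K ε n γ) : IsQuasigeodesic dist K' ε n γ := fun i j hi hj => by
  obtain ⟨hlower, hupper⟩ := hγ i j hi hj
  have hinv : 1 / K' ≤ 1 / K := one_div_le_one_div_of_le (by linarith) hKK'
  constructor
  · exact le_trans (by gcongr) hlower
  · exact hupper.trans (by gcongr)

theorem IsGeodesic.isQuasigeodesic (hγ : IsGeodesic dist n γ) (hK : 1 ≤ K) (hε : 0 ≤ ε) :
    IsQuasigeodesic dist K ε n γ := fun i j hi hj => by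
  rw [hγ i j hi hj]
  have habs := abs_nonneg ((i : ℝ) - j)
  have hinv : 1 / K ≤ 1 := (div_le_one (by linarith)).2 hK
  constructor <;> nlinarith

theorem one_div_mul_dist_add_sub_le_dist {x y z : X} {l : ℝ} (hK : 1 ≤ K) (hε : 0 ≤ ε)
    (hnear : dist x y ≤ dist x z) (hl : 1 / K * l - ε ≤ dist y z) :
    1 / (3 * K) * (dist x y + l) - ε ≤ dist x z := by
  have hK0 : 0 < K := by linarith
  have hyz : dist y z ≤ 2 * dist x z := by
    linarith [dist_triangle y x z, dist_comm x y]
  have hlK : l ≤ K * (2 * dist x z + ε) := by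
    rw [← inv_mul_le_iff₀ hK0, ← one_div]
    linarith
  rw [sub_le_iff_le_add, one_div, inv_mul_le_iff₀ (by positivity)]
  nlinarith [mul_nonneg (sub_nonneg.2 hK) (dist_nonneg (x := x) (y := z)), mul_nonneg hK0.le hε]

theorem IsQuasigeodesic.concat_geodesic (hK : 1 ≤ K) (hε : 0 ≤ ε)
    (hη : IsQuasigeodesic dist K ε n η) (hγ : IsGeodesic dist m γ) (hm : γ m = η 0)
    (hnear : ∀ l ≤ n, dist (γ 0) (η 0) ≤ dist (γ 0) (η l)) :
    IsQuasigeodesic dist (3 * K) ε (m + n) (concatPath m γ η) := by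
  refine isQuasigeodesic_of_le fun i j hij hj => ?_
  rcases le_total j m with hjm | hmj
  · rw [concatPath_of_le γ η hjm, concatPath_of_le γ η (hij.trans hjm)]
    exact (hγ.isQuasigeodesic (by linarith) hε).dist_of_le hij hjm
  obtain ⟨l, rfl⟩ := Nat.exists_eq_add_of_le hmj
  have hl : l ≤ n := by omega
  rw [concatPath_add hm]
  rcases le_total m i with hmi | him
  · obtain ⟨k, rfl⟩ := Nat.exists_eq_add_of_le hmi
    rw [concatPath_add hm]
    simpa using (hη.mono (K' := 3 * K) hK (by linarith)).dist_of_le (by omega : k ≤ l) hl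
  · rw [concatPath_of_le γ η him]
    have hi0 : dist (γ i) (η 0) = (m : ℝ) - i := hm ▸ hγ.dist_of_le him le_rfl
    have h0i := hγ.dist_of_le i.zero_le him
    have h0m := hγ.dist_of_le m.zero_le le_rfl
    obtain ⟨hlower, hupper⟩ := hη.dist_of_le l.zero_le hl
    have hclosest : dist (γ i) (η 0) ≤ dist (γ i) (η l) := by
      have := hnear l hl
      rw [← hm, h0m] at this
      linarith [dist_triangle (γ 0) (γ i) (η l)]
    have hsplit : ((m + l : ℕ) : ℝ) - i = dist (γ i) (η 0) + l := by
      rw [hi0]; push_cast; ring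
    rw [hsplit]
    simp only [Nat.cast_zero, sub_zero] at hlower hupper
    refine ⟨one_div_mul_dist_add_sub_le_dist hK hε hclosest hlower, ?_⟩
    calc dist (γ i) (η l) ≤ dist (γ i) (η 0) + (K * l + ε) := by
          linarith [dist_triangle (γ i) (η 0) (η l)]
      _ ≤ 3 * K * (dist (γ i) (η 0) + l) + ε := by
          nlinarith [mul_nonneg (sub_nonneg.2 hK) (dist_nonneg (x := γ i) (y := η 0)),
            dist_nonneg (x := γ i) (y := η 0), mul_nonneg (by linarith : 0 ≤ K) l.cast_nonneg]

theorem IsQuasigeodesic.of_close {a : ℕ} {σ : ℕ → ℕ} (hK : 1 ≤ K)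
    (hη : IsQuasigeodesic dist K ε m η) (hσm : ∀ t ≤ n, σ t ≤ m) (hσ : ∀ t ≤ n, σ t ≤ t)
    (hσa : ∀ t ≤ n, t ≤ σ t + a) (hclose : ∀ t ≤ n, dist (γ t) (η (σ t)) ≤ r) :
    IsQuasigeodesic dist K (ε + 2 * r + a * K) n γ := by
  intro s t hs ht
  have htime : |((σ s : ℝ) - σ t) - (s - t)| ≤ a := by
    have hs₁ : (σ s : ℝ) ≤ s := by exact_mod_cast hσ s hs
    have hs₂ : (s : ℝ) ≤ σ s + a := by exact_mod_cast hσa s hs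
    have ht₁ : (σ t : ℝ) ≤ t := by exact_mod_cast hσ t ht
    have ht₂ : (t : ℝ) ≤ σ t + a := by exact_mod_cast hσa t ht
    rw [abs_le]
    constructor <;> linarith
  have htime' := abs_le.1 ((abs_abs_sub_abs_le _ _).trans htime)
  have hspace : |dist (γ s) (γ t) - dist (η (σ s)) (η (σ t))| ≤ 2 * r := by
    rw [← Real.dist_eq]
    linarith [dist_dist_dist_le (γ s) (γ t) (η (σ s)) (η (σ t)), hclose s hs, hclose t ht]
  have hspace' := abs_le.1 hspace
  obtain ⟨hlower, hupper⟩ := hη (σ s) (σ t) (hσm s hs) (hσm t ht)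
  have hinv : 1 / K ≤ K := (div_le_one (by linarith)).2 hK |>.trans hK
  have hinv0 : 0 ≤ 1 / K := by positivity
  have ha : (0 : ℝ) ≤ a := a.cast_nonneg
  constructor
  · nlinarith [mul_le_mul_of_nonneg_left htime'.1 hinv0, mul_le_mul_of_nonneg_right hinv ha]
  · nlinarith [mul_le_mul_of_nonneg_left htime'.2 (by linarith : 0 ≤ K)]

theorem IsQuasigeodesic.attachEnds {x y : X} (hK : 1 ≤ K) (hη : IsQuasigeodesic dist K ε m η)
    (hx : dist (η 0) x ≤ r) (hy : dist (η m) y ≤ r) :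
    IsQuasigeodesic dist K (ε + 2 * r + 2 * K) (m + 2) (attachEnds x y m η) := by
  refine hη.of_close (a := 2) (σ := fun t => min (t - 1) m) hK
    (fun t _ => by omega) (fun t _ => by omega) (fun t _ => by omega) fun t ht => ?_
  rcases t with _ | t
  · simpa [_root_.attachEnds, dist_comm] using hx
  by_cases htm : t ≤ m
  · simpa [_root_.attachEnds, htm] using dist_nonneg.trans hx
  · simpa [_root_.attachEnds, htm, (not_le.1 htm).le, dist_comm] using hy

end MetricPaths

section StablePaths

variable {X : Type*} [PseudoMetricSpace X] {f : ℝ → ℝ → ℝ} {K ε r : ℝ} {n m : ℕ} {γ η : ℕ → X}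

/-- How far a `(K, ε)`-quasigeodesic can stray from an `f`-stable path whose endpoints are
`r`-close to its own. -/
def fellowConst (f : ℝ → ℝ → ℝ) (K ε r : ℝ) : ℝ :=
  f K (ε + 2 * r + 2 * K)

theorem IsStablePath.exists_dist_le_fellowConst (hγ : IsStablePath dist f n γ) (hK : 1 ≤ K)
    (hε : 0 ≤ ε) (hη : IsQuasigeodesic dist K ε m η) (h0 : dist (η 0) (γ 0) ≤ r)
    (hend : dist (η m) (γ n) ≤ r) {j : ℕ} (hj : j ≤ m) :
    ∃ i ≤ n, dist (η j) (γ i) ≤ fellowConst f K ε r := by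
  have hr : 0 ≤ r := dist_nonneg.trans h0
  have hnear := hγ K (ε + 2 * r + 2 * K) hK (by positivity) (m + 2)
    (attachEnds (γ 0) (γ n) m η) (hη.attachEnds hK h0 hend) ⟨0, n.zero_le, rfl⟩
    ⟨n, le_rfl, by simp [attachEnds]⟩ (j + 1) (by omega)
  rwa [attachEnds, if_pos hj] at hnear

theorem IsStablePath.exists_dist_le_of_nearest (hX : HasDiscreteGeodesics X)
    (hγ : IsStablePath dist f n γ) (hK : 1 ≤ K) (hε : 0 ≤ ε)
    (hη : IsQuasigeodesic dist K ε m η) {x : X} (hnear : ∀ l ≤ m, dist x (η 0) ≤ dist x (η l))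
    (h0 : dist x (γ 0) ≤ r) (hend : dist (η m) (γ n) ≤ r) :
    ∃ i ≤ n, dist (η 0) (γ i) ≤ fellowConst f (3 * K) ε r := by
  obtain ⟨k, α, hα, rfl, hαk⟩ := hX x (η 0)
  have hconcat := hη.concat_geodesic hK hε hα hαk hnear
  have h0' : dist (concatPath k α η 0) (γ 0) ≤ r := by rwa [concatPath_of_le α η k.zero_le]
  have hend' : dist (concatPath k α η (k + m)) (γ n) ≤ r := by rwa [concatPath_add hαk]
  simpa only [concatPath_of_le α η le_rfl, hαk] using
    hγ.exists_dist_le_fellowConst (by linarith) hε hconcat h0' hend' (Nat.le_add_right k m)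

end StablePaths

section StableEmbeddings

variable {X Y : Type*} [PseudoMetricSpace X] [PseudoMetricSpace Y]

/-- A `(μ, c)`-quasi-isometric embedding which sends geodesics to `f`-stable paths. -/
structure IsStableEmbedding (μ c : ℝ) (f : ℝ → ℝ → ℝ) (φ : Y → X) : Prop where
  one_le : 1 ≤ μ
  nonneg : 0 ≤ c
  dist_map : ∀ y z, 1 / μ * dist y z - c ≤ dist (φ y) (φ z) ∧ dist (φ y) (φ z) ≤ μ * dist y z + c
  isStablePath : ∀ (n : ℕ) (γ : ℕ → Y), IsGeodesic dist n γ →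
    IsStablePath dist f n fun i => φ (γ i)

/-- How close a stable geodesic running from a point `x` to within `r` of the image of another
stable embedding must pass to the nearest point projection of `x` to that image. -/
def gateConst (μ c : ℝ) (f : ℝ → ℝ → ℝ) (r : ℝ) : ℝ :=
  fellowConst f (3 * μ) c r

namespace IsStableEmbedding

variable {μ c r : ℝ} {f : ℝ → ℝ → ℝ} {φ ψ : Y → X} {n m : ℕ} {γ η : ℕ → Y}

theorem isQuasigeodesic (hφ : IsStableEmbedding μ c f φ) (hγ : IsGeodesic dist n γ) :
    IsQuasigeodesic dist μ c n fun i => φ (γ i) := fun i j hi hj => by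
  simpa only [hγ i j hi hj] using hφ.dist_map (γ i) (γ j)

theorem dist_le_of_dist_map_le (hφ : IsStableEmbedding μ c f φ) {y z : Y}
    (h : dist (φ y) (φ z) ≤ r) : dist y z ≤ μ * (r + c) := by
  rw [← inv_mul_le_iff₀ (by linarith [hφ.one_le]), ← one_div]
  linarith [(hφ.dist_map y z).1]

theorem exists_dist_le_gateConst (hX : HasDiscreteGeodesics X) (hφ : IsStableEmbedding μ c f φ)
    (hψ : IsStableEmbedding μ c f ψ) (hη : IsGeodesic dist m η) (hγ : IsGeodesic dist n γ)
    {x : X} (hnear : ∀ l ≤ m, dist x (φ (η 0)) ≤ dist x (φ (η l)))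
    (h0 : dist x (ψ (γ 0)) ≤ r) (hend : dist (φ (η m)) (ψ (γ n)) ≤ r) :
    ∃ i ≤ n, dist (φ (η 0)) (ψ (γ i)) ≤ gateConst μ c f r :=
  (hψ.isStablePath n γ hγ).exists_dist_le_of_nearest hX hφ.one_le hφ.nonneg
    (hφ.isQuasigeodesic hη) hnear h0 hend

/-- The images of the embeddings are the sides of a triangle; its coarse centre is the projection
of the vertex where `φ₁` and `φ₂` meet to the opposite side. -/
theorem exists_centre (hX : HasDiscreteGeodesics X) (hY : HasDiscreteGeodesics Y)
    {φ₀ φ₁ φ₂ : Y → X} (h₀ : IsStableEmbedding μ c f φ₀) (h₁ : IsStableEmbedding μ c f φ₁)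
    (h₂ : IsStableEmbedding μ c f φ₂) (h₀₁ : ∃ y z, dist (φ₀ y) (φ₁ z) ≤ r)
    (h₀₂ : ∃ y z, dist (φ₀ y) (φ₂ z) ≤ r) (h₁₂ : ∃ y z, dist (φ₁ y) (φ₂ z) ≤ r) :
    ∃ z z₁ z₂, dist (φ₀ z) (φ₁ z₁) ≤ gateConst μ c f r ∧
      dist (φ₀ z) (φ₂ z₂) ≤ gateConst μ c f r := by
  obtain ⟨a₁, b₁, hab₁⟩ := h₀₁
  obtain ⟨a₂, b₂, hab₂⟩ := h₀₂
  obtain ⟨v₁, v₂, hv⟩ := h₁₂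
  have hr : 0 ≤ r := dist_nonneg.trans hv
  obtain ⟨n, γ, hγ, rfl, rfl⟩ := hY a₁ a₂
  obtain ⟨k, hk⟩ := hX.exists_nearest (φ₁ v₁) fun k : Fin (n + 1) => φ₀ (γ k)
  have hkn : (k : ℕ) ≤ n := Nat.le_of_lt_succ k.2
  have hnear : ∀ l ≤ n, dist (φ₁ v₁) (φ₀ (γ k)) ≤ dist (φ₁ v₁) (φ₀ (γ l)) := fun l hl =>
    hk ⟨l, Nat.lt_succ_of_le hl⟩
  obtain ⟨m₁, α, hα, rfl, rfl⟩ := hY v₁ b₁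
  obtain ⟨m₂, β, hβ, rfl, rfl⟩ := hY v₂ b₂
  obtain ⟨i, -, hi⟩ := exists_dist_le_gateConst hX h₀ h₁ (hγ.reverse hkn) hα
    (fun l _ => hnear (k - l) (by omega)) (by simpa using hr) (by simpa using hab₁)
  obtain ⟨j, -, hj⟩ := exists_dist_le_gateConst hX h₀ h₂ (hγ.tail hkn) hβ
    (fun l _ => hnear (k + l) (by omega)) hv (by simpa [Nat.add_sub_cancel' hkn] using hab₂)
  exact ⟨γ k, α i, β j, hi, hj⟩

/-- The nearest point `φ p` to `ψ o` is a gate: every geodesic from `o` whose image ends near the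
image of `φ` passes it, at a time which does not depend on the geodesic. -/
theorem exists_gate (hX : HasDiscreteGeodesics X) (hY : HasDiscreteGeodesics Y)
    (hφ : IsStableEmbedding μ c f φ) (hψ : IsStableEmbedding μ c f ψ) (hγ : IsGeodesic dist n γ)
    {p q z : Y} (hp : ∀ y, dist (ψ (γ 0)) (φ p) ≤ dist (ψ (γ 0)) (φ y))
    (hq : ∀ y, dist (φ p) (ψ q) ≤ dist (φ p) (ψ y)) (hz : dist (ψ (γ n)) (φ z) ≤ r) :
    ∃ s ≤ n, dist (φ p) (ψ (γ s)) ≤ gateConst μ c f r ∧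
      |(s : ℝ) - dist (γ 0) q| ≤ μ * (2 * gateConst μ c f r + c) := by
  obtain ⟨m, α, hα, rfl, rfl⟩ := hY p z
  obtain ⟨s, hs, hgate⟩ := exists_dist_le_gateConst hX hφ hψ hα hγ (fun l _ => hp (α l))
    (by simpa using dist_nonneg.trans hz) (by rwa [dist_comm])
  refine ⟨s, hs, hgate, ?_⟩
  have hqs : dist (ψ (γ s)) (ψ q) ≤ 2 * gateConst μ c f r := by
    linarith [dist_triangle_left (ψ (γ s)) (ψ q) (φ (α 0)), hq (γ s)]
  have hs0 : dist (γ 0) (γ s) = s := by simpa using hγ.dist_of_le s.zero_le hs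
  calc |(s : ℝ) - dist (γ 0) q| = |dist (γ s) (γ 0) - dist q (γ 0)| := by
        rw [← hs0, dist_comm q, dist_comm (γ s)]
    _ ≤ dist (γ s) q := abs_dist_sub_le _ _ _
    _ ≤ μ * (2 * gateConst μ c f r + c) := hψ.dist_le_of_dist_map_le hqs

theorem exists_dist_le_of_gate_le (hY : HasDiscreteGeodesics Y) (hφ : IsStableEmbedding μ c f φ)
    (hψ : IsStableEmbedding μ c f ψ) (hγ : IsGeodesic dist n γ) {p z : Y} {s t : ℕ} {b : ℝ}
    (hs : s ≤ n) (ht : t ≤ n) (hp : dist (φ p) (ψ (γ t)) ≤ r) (hz : dist (ψ (γ n)) (φ z) ≤ r)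
    (hst : (t : ℝ) ≤ s + b) :
    ∃ y, dist (ψ (γ s)) (φ y) ≤ max (fellowConst f μ c r) (μ * b + c + r) := by
  have hμ : 0 ≤ μ := by linarith [hφ.one_le]
  rcases le_total t s with hts | hst'
  · obtain ⟨m, α, hα, rfl, rfl⟩ := hY p z
    obtain ⟨i, -, hi⟩ := (hφ.isStablePath m α hα).exists_dist_le_fellowConst hφ.one_le hφ.nonneg
      (hψ.isQuasigeodesic (hγ.tail ht)) (by simpa [dist_comm] using hp)
      (by simpa [Nat.add_sub_cancel' ht] using hz) (Nat.sub_le_sub_right hs t)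
    rw [Nat.add_sub_cancel' hts] at hi
    exact ⟨α i, hi.trans (le_max_left _ _)⟩
  · refine ⟨p, le_max_of_le_right ?_⟩
    calc dist (ψ (γ s)) (φ p) ≤ dist (ψ (γ s)) (ψ (γ t)) + dist (φ p) (ψ (γ t)) :=
          dist_triangle_right _ _ _
      _ ≤ (μ * ((t : ℝ) - s) + c) + r :=
          add_le_add ((hψ.isQuasigeodesic hγ).dist_of_le hst' ht).2 hp
      _ ≤ μ * b + c + r := by gcongr; linarith

end IsStableEmbedding

/-- The radius in the coarse Helly property
`IsStableEmbedding.exists_forall_dist_le_hellyConst`. The two nested gate constants come from the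
centre of a triangle of embeddings and from the projections to the embeddings. -/
def hellyConst (μ c : ℝ) (f : ℝ → ℝ → ℝ) (D : ℝ) : ℝ :=
  let R₁ := gateConst μ c f D
  let R₂ := gateConst μ c f R₁
  let r := max R₁ R₂
  R₂ + max (fellowConst f μ c r) (μ * (2 * (μ * (2 * R₂ + c))) + c + r)

theorem IsStableEmbedding.exists_forall_dist_le_hellyConst {ι : Type*} [Finite ι] [Nonempty ι]
    {μ c D : ℝ} {f : ℝ → ℝ → ℝ} {φ : ι → Y → X} (hX : HasDiscreteGeodesics X)
    (hY : HasDiscreteGeodesics Y) (hφ : ∀ i, IsStableEmbedding μ c f (φ i))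
    (hclose : ∀ i j, ∃ y z, dist (φ i y) (φ j z) ≤ D) :
    ∃ x, ∀ j, ∃ y, dist x (φ j y) ≤ hellyConst μ c f D := by
  obtain ⟨i₀⟩ := ‹Nonempty ι›
  obtain ⟨o, -, -⟩ := hclose i₀ i₀
  have : Nonempty Y := ⟨o⟩
  choose p hp using fun i => hX.exists_nearest (φ i₀ o) (φ i)
  choose q hq using fun i => hX.exists_nearest (φ i (p i)) (φ i₀)
  have : Nonempty ι := ⟨i₀⟩
  obtain ⟨i, hi⟩ := Finite.exists_max fun i => dist o (q i)
  refine ⟨φ i (p i), fun j => ?_⟩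
  obtain ⟨z, zi, zj, hzi, hzj⟩ := exists_centre hX hY (hφ i₀) (hφ i) (hφ j) (hclose i₀ i)
    (hclose i₀ j) (hclose i j)
  obtain ⟨n, γ, hγ, rfl, rfl⟩ := hY o z
  obtain ⟨s, hs, hps, hqs⟩ := exists_gate hX hY (hφ i) (hφ i₀) hγ (hp i) (hq i) hzi
  obtain ⟨t, ht, hpt, hqt⟩ := exists_gate hX hY (hφ j) (hφ i₀) hγ (hp j) (hq j) hzj
  have hts : (t : ℝ) ≤ s + 2 * (μ * (2 * gateConst μ c f (gateConst μ c f D) + c)) := by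
    linarith [hi j, (abs_le.1 hqs).1, (abs_le.1 hqt).2]
  obtain ⟨y, hy⟩ := exists_dist_le_of_gate_le hY (hφ j) (hφ i₀) hγ hs ht
    (hpt.trans (le_max_right _ _)) (hzj.trans (le_max_left _ _)) hts
  exact ⟨y, (dist_triangle _ _ _).trans (add_le_add hps hy)⟩

end StableEmbeddings

section WordMetric

variable {G : Type*} [Group G] {S : Set G}

theorem exists_list_length_eq_wordLength (hS : Subgroup.closure S = ⊤) (g : G) :
    ∃ l : List G, l.length = wordLength S g ∧ (∀ x ∈ l, x ∈ S ∨ x⁻¹ ∈ S) ∧ l.prod = g := by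
  have hmem : g ∈ Submonoid.closure (S ∪ S⁻¹) := by
    rw [← Subgroup.closure_toSubmonoid, hS]
    exact Subgroup.mem_top g
  obtain ⟨l, hl, hg⟩ := Submonoid.exists_list_of_mem_closure hmem
  exact Nat.sInf_mem (s := {n : ℕ | ∃ l : List G, l.length = n ∧
    (∀ x ∈ l, x ∈ S ∨ x⁻¹ ∈ S) ∧ l.prod = g}) ⟨l.length, l, rfl, hl, hg⟩

theorem wordLength_prod_le {l : List G} (hl : ∀ x ∈ l, x ∈ S ∨ x⁻¹ ∈ S) :
    wordLength S l.prod ≤ l.length :=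
  Nat.sInf_le ⟨l, rfl, hl, rfl⟩

theorem wordLength_one : wordLength S (1 : G) = 0 :=
  Nat.le_zero.1 (wordLength_prod_le (l := []) (by simp))

theorem wordLength_le_one {x : G} (hx : x ∈ S ∨ x⁻¹ ∈ S) : wordLength S x ≤ 1 := by
  simpa using wordLength_prod_le (l := [x]) (by simpa using hx)

theorem wordLength_mul_le (hS : Subgroup.closure S = ⊤) (g h : G) :
    wordLength S (g * h) ≤ wordLength S g + wordLength S h := by
  obtain ⟨l, hlen, hl, rfl⟩ := exists_list_length_eq_wordLength hS g
  obtain ⟨k, hlen', hk, rfl⟩ := exists_list_length_eq_wordLength hS h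
  rw [← hlen, ← hlen', ← List.prod_append, ← List.length_append]
  exact wordLength_prod_le fun x hx => (List.mem_append.1 hx).elim (hl x) (hk x)

theorem wordLength_inv_le (hS : Subgroup.closure S = ⊤) (g : G) :
    wordLength S g⁻¹ ≤ wordLength S g := by
  obtain ⟨l, hlen, hl, rfl⟩ := exists_list_length_eq_wordLength hS g
  rw [← hlen, List.prod_inv_reverse]
  refine (wordLength_prod_le ?_).trans_eq (by simp)
  intro x hx
  simp only [List.mem_reverse, List.mem_map] at hx
  obtain ⟨y, hy, rfl⟩ := hx
  simpa [or_comm] using hl y hy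

theorem wordLength_inv (hS : Subgroup.closure S = ⊤) (g : G) :
    wordLength S g⁻¹ = wordLength S g :=
  (wordLength_inv_le hS g).antisymm (by simpa using wordLength_inv_le hS g⁻¹)

theorem wordDist_mul_left (g a b : G) : wordDist S (g * a) (g * b) = wordDist S a b := by
  rw [wordDist, wordDist, mul_inv_rev, mul_assoc, inv_mul_cancel_left]

/-- A group with the word metric of a generating set. It is kept out of the instances because the
metric depends on the generating set. -/
noncomputable abbrev wordPseudoMetricSpace (S : Set G) (hS : Subgroup.closure S = ⊤) :
    PseudoMetricSpace G where
  dist := wordDist S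
  dist_self g := by simp [wordDist, wordLength_one]
  dist_comm g h := by simp [wordDist, ← wordLength_inv hS (g⁻¹ * h)]
  dist_triangle a b c := by
    have h := wordLength_mul_le hS (a⁻¹ * b) (b⁻¹ * c)
    rw [mul_assoc, mul_inv_cancel_left] at h
    simpa only [wordDist, ← Nat.cast_add, Nat.cast_le] using h

theorem hasDiscreteGeodesics_wordPseudoMetricSpace (hS : Subgroup.closure S = ⊤) :
    @HasDiscreteGeodesics G (wordPseudoMetricSpace S hS) := by
  let _ := wordPseudoMetricSpace S hS
  intro a b
  obtain ⟨l, hlen, hl, hprod⟩ := exists_list_length_eq_wordLength hS (a⁻¹ * b)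
  have h0 : a * (l.take 0).prod = a := by simp
  have hend : a * (l.take l.length).prod = b := by simp [hprod]
  refine ⟨l.length, fun i => a * (l.take i).prod, ?_, h0, hend⟩
  refine isGeodesic_of_dist_succ_le_one (fun i hi => ?_) ?_
  · change wordDist S (a * _) (a * _) ≤ 1
    rw [wordDist_mul_left, wordDist, List.prod_take_succ l i hi, inv_mul_cancel_left]
    exact_mod_cast wordLength_le_one (hl _ (List.getElem_mem hi))
  · rw [h0, hend, hlen]
    exact le_rfl

theorem finite_setOf_wordLength_le (hfin : S.Finite) (hS : Subgroup.closure S = ⊤) (n : ℕ) :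
    {g : G | wordLength S g ≤ n}.Finite := by
  have : Finite ↥(S ∪ S⁻¹) := (hfin.union hfin.inv).to_subtype
  refine ((List.finite_length_le ↥(S ∪ S⁻¹) n).image fun l => (l.map (↑)).prod).subset ?_
  intro g hg
  obtain ⟨l, hlen, hl, rfl⟩ := exists_list_length_eq_wordLength hS g
  lift l to List ↥(S ∪ S⁻¹) using hl
  exact ⟨l, (List.length_map _).symm.trans_le (hlen.trans_le hg), rfl⟩

theorem finite_setOf_wordDist_one_le (hfin : S.Finite) (hS : Subgroup.closure S = ⊤) (R : ℝ) :
    {g : G | wordDist S 1 g ≤ R}.Finite :=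
  (finite_setOf_wordLength_le hfin hS ⌊R⌋₊).subset fun g hg =>
    Nat.le_floor (by simpa [wordDist] using hg)

theorem exists_wordDist_lt_of_setDist_lt {A B : Set G} (hA : A.Nonempty) (hB : B.Nonempty) {D : ℝ}
    (h : setDist S A B < D) : ∃ a ∈ A, ∃ b ∈ B, wordDist S a b < D := by
  obtain ⟨a, ha⟩ := hA
  obtain ⟨b, hb⟩ := hB
  have hne : {r : ℝ | ∃ a ∈ A, ∃ b ∈ B, r = wordDist S a b}.Nonempty := ⟨_, a, ha, b, hb, rfl⟩
  obtain ⟨_, ⟨a', ha', b', hb', rfl⟩, hlt⟩ := exists_lt_of_csInf_lt hne h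
  exact ⟨a', ha', b', hb', hlt⟩

end WordMetric

section Cosets

variable {G : Type*} [Group G] {S : Set G} {H : Subgroup G}

theorem card_le_ncard_of_pairwise_smul_ne {ι : Type*} [Fintype ι] {g : ι → G} {B : Set G}
    (hg : Pairwise fun i j => g i • (H : Set G) ≠ g j • (H : Set G)) (hB : B.Finite)
    (hmeet : ∀ i, ∃ u : H, g i * u ∈ B) : Fintype.card ι ≤ B.ncard := by
  choose u hu using hmeet
  have hinj : Function.Injective fun i => g i * (u i : G) := fun i j hij => by
    by_contra hne
    refine hg hne ((leftCoset_eq_iff H).2 ?_)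
    have hmul : (g i)⁻¹ * g j = u i * (u j : G)⁻¹ := by
      rw [inv_mul_eq_iff_eq_mul, ← mul_assoc, eq_mul_inv_iff_mul_eq]
      exact hij.symm
    exact hmul ▸ (u i * (u j)⁻¹).2
  rw [← Nat.card_eq_fintype_card, ← Set.ncard_univ, ← Set.ncard_image_of_injective _ hinj]
  exact Set.ncard_le_ncard (by rintro _ ⟨i, -, rfl⟩; exact hu i) hB

theorem IsStablePath.mul_left {f : ℝ → ℝ → ℝ} {n : ℕ} {γ : ℕ → G}
    (hγ : IsStablePath (wordDist S) f n γ) (g : G) :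
    IsStablePath (wordDist S) f n fun i => g * γ i := by
  rintro K ε hK hε m η hη ⟨i₀, hi₀, h₀⟩ ⟨i₁, hi₁, h₁⟩ j hj
  have hη' : IsQuasigeodesic (wordDist S) K ε m fun t => g⁻¹ * η t := fun s t hs ht => by
    simpa only [wordDist_mul_left] using hη s t hs ht
  obtain ⟨i, hi, hij⟩ := hγ K ε hK hε m _ hη' ⟨i₀, hi₀, by simp [h₀]⟩ ⟨i₁, hi₁, by simp [h₁]⟩ j hj
  refine ⟨i, hi, ?_⟩
  rwa [← wordDist_mul_left g, mul_inv_cancel_left] at hij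

theorem IsStableSubgroup.exists_radius (hstable : IsStableSubgroup S H)
    (hS : Subgroup.closure S = ⊤) (D : ℝ) :
    ∃ R : ℝ, ∀ (ι : Type*) [Finite ι] [Nonempty ι] (g : ι → G),
      (∀ i j, ∃ u v : H, wordDist S (g i * u) (g j * v) ≤ D) →
      ∃ x : G, ∀ j, ∃ u : H, wordDist S x (g j * u) ≤ R := by
  obtain ⟨f, T, -, hT, ⟨μ, c, hμ, hc, hdist⟩, hgeod⟩ := hstable
  let _ : PseudoMetricSpace G := wordPseudoMetricSpace S hS
  let _ : PseudoMetricSpace H := wordPseudoMetricSpace T hT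
  have hcoset : ∀ g : G, IsStableEmbedding μ c f fun h : H => g * (h : G) := fun g =>
    { one_le := hμ
      nonneg := hc
      dist_map := fun y z => by
        change _ ≤ wordDist S _ _ ∧ wordDist S _ _ ≤ _
        rw [wordDist_mul_left]
        exact hdist y z
      isStablePath := fun n γ hγ => (hgeod n γ hγ).2.mul_left g }
  exact ⟨hellyConst μ c f D, fun ι _ _ g hclose =>
    IsStableEmbedding.exists_forall_dist_le_hellyConst
      (hasDiscreteGeodesics_wordPseudoMetricSpace hS)
      (hasDiscreteGeodesics_wordPseudoMetricSpace hT) (fun i => hcoset (g i)) hclose⟩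

end Cosets

/-- **Bounded packing for a single stable subgroup.** For every `D ≥ 0` there is `N` such
that among any `N` distinct left cosets of `H` two are at distance at least `D`. -/
theorem bounded_packing_of_stable {G : Type*} [Group G] (S : Set G) (hSfin : S.Finite)
    (hSgen : Subgroup.closure S = ⊤) (H : Subgroup G) (hstable : IsStableSubgroup S H) :
    ∀ D : ℝ, 0 ≤ D → ∃ N : ℕ, ∀ g : Fin N → G,
      (∀ i j : Fin N, i ≠ j → g i • (H : Set G) ≠ g j • (H : Set G)) →
      ∃ i j : Fin N, i ≠ j ∧ D ≤ setDist S (g i • (H : Set G)) (g j • (H : Set G)) := by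
  intro D hD
  obtain ⟨R, hR⟩ := hstable.exists_radius hSgen D
  refine ⟨{x : G | wordDist S 1 x ≤ R}.ncard + 1, fun g hg => ?_⟩
  by_contra! hlt
  have hclose : ∀ i j, ∃ u v : H, wordDist S (g i * u) (g j * v) ≤ D := fun i j => by
    rcases eq_or_ne i j with rfl | hij
    · exact ⟨1, 1, by simpa [wordDist, wordLength_one] using hD⟩
    · obtain ⟨_, ⟨u, hu, rfl⟩, _, ⟨v, hv, rfl⟩, huv⟩ := exists_wordDist_lt_of_setDist_lt
        (OneMemClass.coe_nonempty H).smul_set (OneMemClass.coe_nonempty H).smul_set (hlt i j hij)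
      exact ⟨⟨u, hu⟩, ⟨v, hv⟩, huv.le⟩
  obtain ⟨x, hx⟩ := hR _ g hclose
  have hne : Pairwise fun i j => (x⁻¹ * g i) • (H : Set G) ≠ (x⁻¹ * g j) • (H : Set G) :=
    fun i j hij => by simpa [mul_smul] using hg i j hij
  have hcard := card_le_ncard_of_pairwise_smul_ne hne (finite_setOf_wordDist_one_le hSfin hSgen R)
    fun i => (hx i).imp fun u hu => by
      simpa [mul_assoc] using (wordDist_mul_left x⁻¹ x _).trans_le hu
  simp at hcard
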